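/- Let i > p−1 and let γ ∈ Ĥ_i with J_i(γ) ≠ {0}. Then the Lie ring L_i(γ) = 𝔭^i/J_i(γ) is nilpotent of class at most p−1; that is, W_p(i) ⊆ J_i(γ). -/

import Mathlib

set_option synthInstance.maxHeartbeats 1000000
set_option maxHeartbeats 1000000

namespace MaximalClassFrame

variable (p : ℕ) [Fact p.Prime]
variable (K : Type) [Field K] [Algebra ℚ_[p] K] [Algebra ℤ_[p] K]
  [IsScalarTower ℤ_[p] ℚ_[p] K]

/-- The maximal order `𝒪` of `K`: the integral closure of `ℤ_p` in `K`. -/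
noncomputable abbrev 𝒪 : Subalgebra ℤ_[p] K := integralClosure ℤ_[p] K

variable (θ : 𝒪 p K)

/-- The maximal ideal `𝔭` of `𝒪`, generated by `κ = θ - 1`. -/
noncomputable def pid : Ideal (𝒪 p K) := Ideal.span {θ - 1}

/-- A `ℤ_p`-bilinear map `γ : 𝒪 × 𝒪 → 𝒪` is `P`-equivariant if it is
alternating and satisfies `γ(θx, θy) = θ·γ(x,y)` for all `x, y`. -/
def IsPEquivariant (γ : 𝒪 p K →ₗ[ℤ_[p]] 𝒪 p K →ₗ[ℤ_[p]] 𝒪 p K) : Prop :=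
  (∀ x, γ x x = 0) ∧ ∀ x y, γ (θ * x) (θ * y) = θ * γ x y

/-- `γ ∈ Ĥ_i`: the additive subgroup of `𝒪` generated by
`{γ(x,y) : x, y ∈ 𝔭^i}` equals `𝔭^(2i+1)`. -/
def InHhat (i : ℕ) (γ : 𝒪 p K →ₗ[ℤ_[p]] 𝒪 p K →ₗ[ℤ_[p]] 𝒪 p K) : Prop :=
  Submodule.span ℤ (Set.image2 (fun x y => γ x y)
      ((pid p K θ ^ i : Ideal (𝒪 p K)) : Set (𝒪 p K))
      ((pid p K θ ^ i : Ideal (𝒪 p K)) : Set (𝒪 p K)))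
    = (pid p K θ ^ (2 * i + 1)).restrictScalars ℤ

variable (γ : 𝒪 p K →ₗ[ℤ_[p]] 𝒪 p K →ₗ[ℤ_[p]] 𝒪 p K)

/-- The ideal `J_i(γ)` of `𝒪` generated by the Jacobi expressions
`γ(γ(x,y),z) + γ(γ(y,z),x) + γ(γ(z,x),y)` for `x, y, z ∈ 𝔭^i`. -/
noncomputable def Jid (i : ℕ) : Ideal (𝒪 p K) :=
  Ideal.span {v : 𝒪 p K | ∃ x ∈ pid p K θ ^ i, ∃ y ∈ pid p K θ ^ i, ∃ z ∈ pid p K θ ^ i,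
    v = γ (γ x y) z + γ (γ y z) x + γ (γ z x) y}

/-- The ideals `W_k(i)`:  `W_1(i) = 𝔭^i` and `W_{k+1}(i)` is the ideal
generated by `{γ(x,y) : x ∈ W_k(i), y ∈ 𝔭^i}`. -/
noncomputable def Wid (i : ℕ) : ℕ → Ideal (𝒪 p K)
  | 0 => ⊤
  | 1 => pid p K θ ^ i
  | (k + 2) => Ideal.span (Set.image2 (fun x y => γ x y)
      ((Wid i (k + 1) : Ideal (𝒪 p K)) : Set (𝒪 p K))
      ((pid p K θ ^ i : Ideal (𝒪 p K)) : Set (𝒪 p K)))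

end MaximalClassFrame

section
open Submodule

/-- Adjoining a nilpotent element that normalizes a nilpotent space of operators keeps it
nilpotent. -/
theorem Submodule.exists_pow_sup_span_singleton_eq_bot {F A : Type*} [Field F] [Ring A]
    [Algebra F A]
    (P : Submodule F A) {n : ℕ} (hn : P ^ n = ⊥) (x : A) {m : ℕ} (hm : x ^ m = 0)
    (hx : ∀ y ∈ P, x * y - y * x ∈ P) :
    ∃ k : ℕ, (P ⊔ span F {x}) ^ k = ⊥ := by
  set Q := P ⊔ span F {x} with hQ
  set U : Submodule F A := Subalgebra.toSubmodule (Algebra.adjoin F (Q : Set A)) with hU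
  have hUU : U * U = U := (Subalgebra.isIdempotentElem_toSubmodule _).eq
  have hQU : Q ≤ U := fun y hy => Algebra.subset_adjoin hy
  have hPQ : P ≤ Q := le_sup_left
  have h1U : (1 : Submodule F A) ≤ U := by
    rw [Submodule.one_le]; exact one_mem (Algebra.adjoin F (Q : Set A))
  have hPU : P ≤ P * U := by
    calc P = P * 1 := (mul_one _).symm
      _ ≤ P * U := mul_le_mul_right h1U _
  have hUP : U * P ≤ P * U := by
    rw [Submodule.mul_le]
    intro u hu
    have hu' : u ∈ Algebra.adjoin F (Q : Set A) := hu
    clear hu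
    induction hu' using Algebra.adjoin_induction with
    | mem q hq =>
      intro y hy
      obtain ⟨a, ha, b, hb, rfl⟩ := Submodule.mem_sup.1 hq
      obtain ⟨c, rfl⟩ := Submodule.mem_span_singleton.1 hb
      have h1 : a * y ∈ P * U := Submodule.mul_mem_mul ha (hQU (hPQ hy))
      have h2 : x * y ∈ P * U := by
        have h3 : y * x ∈ P * U := Submodule.mul_mem_mul hy
          (hQU ((le_sup_right : _ ≤ Q) (Submodule.mem_span_singleton_self x)))
        have := add_mem (hPU (hx y hy)) h3
        simpa using this
      rw [add_mul, smul_mul_assoc]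
      exact add_mem h1 (Submodule.smul_mem _ _ h2)
    | algebraMap r =>
      intro y hy
      rw [← Algebra.smul_def]
      exact Submodule.smul_mem _ _ (hPU hy)
    | add a b _ _ ha hb =>
      intro y hy
      rw [add_mul]
      exact add_mem (ha y hy) (hb y hy)
    | mul a b _ hb' ha hb =>
      intro y hy
      rw [mul_assoc]
      have h : ∀ z ∈ P * U, a * z ∈ P * U := by
        intro z hz
        induction hz using Submodule.mul_induction_on' with
        | mem_mul_mem s hs t ht =>
          rw [← mul_assoc]
          have := Submodule.mul_mem_mul (ha s hs) ht
          rwa [mul_assoc, hUU] at this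
        | add s _ t _ h1 h2 => rw [mul_add]; exact add_mem h1 h2
      exact h _ (hb y hy)
  have hpow : ∀ k, (P * U) ^ k ≤ P ^ k * U := by
    intro k
    induction k with
    | zero => simpa using h1U
    | succ k ih =>
      calc (P * U) ^ (k + 1) = (P * U) ^ k * (P * U) := pow_succ _ _
        _ ≤ P ^ k * U * (P * U) := mul_le_mul_left ih _
        _ = P ^ k * (U * P) * U := by simp only [mul_assoc]
        _ ≤ P ^ k * (P * U) * U := by gcongr
        _ = P ^ (k + 1) * U := by rw [mul_assoc, mul_assoc, hUU, ← mul_assoc, ← pow_succ]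
  have hQm : ∀ k, Q ^ k ≤ span F {x} ^ k ⊔ P * U := by
    intro k
    induction k with
    | zero => simp
    | succ k ih =>
      have e1 : span F {x} ^ k ≤ U := by
        calc span F {x} ^ k ≤ U ^ k := by gcongr; exact le_sup_right.trans hQU
          _ ≤ U := by
            rcases k with _ | k
            · simpa using h1U
            · clear ih
              induction k with
              | zero => simp
              | succ k ih => rw [pow_succ]; exact (mul_le_mul_left ih _).trans hUU.le
      calc Q ^ (k + 1) = Q ^ k * Q := pow_succ _ _
        _ ≤ (span F {x} ^ k ⊔ P * U) * Q := by gcongr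
        _ = span F {x} ^ k * P ⊔ span F {x} ^ k * span F {x} ⊔ P * U * Q := by
            rw [Submodule.sup_mul, hQ, Submodule.mul_sup]
        _ ≤ P * U ⊔ span F {x} ^ (k + 1) ⊔ P * U := by
            refine sup_le_sup (sup_le_sup ((mul_le_mul_left e1 _).trans hUP) ?_) ?_
            · rw [pow_succ]
            · rw [mul_assoc]
              calc P * (U * Q) ≤ P * (U * U) := by gcongr
                _ = P * U := by rw [hUU]
        _ ≤ span F {x} ^ (k + 1) ⊔ P * U := by
            refine sup_le (sup_le le_sup_right le_sup_left) le_sup_right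
  refine ⟨m * n, ?_⟩
  rw [eq_bot_iff, pow_mul]
  have h0 : span F {x} ^ m = ⊥ := by
    rw [Submodule.span_pow]; simp [hm]
  calc (Q ^ m) ^ n ≤ (P * U) ^ n := by
        gcongr; simpa [h0] using hQm m
    _ ≤ P ^ n * U := hpow n
    _ = ⊥ := by rw [hn, Submodule.bot_mul]
    _ ≤ ⊥ := le_rfl
end

section
variable {F : Type*} [Field F] {p : ℕ} [Fact p.Prime] (N : ZMod p → ZMod p → F)

/-- The left multiplication `e_t ↦ N s t • e_(s+t)` by a basis vector in a `ZMod p`-graded algebra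
with one-dimensional components and structure constants `N`. -/
noncomputable def gradedLeftMul (s : ZMod p) : Module.End F (ZMod p → F) :=
  LinearMap.pi fun u => N s (u - s) • LinearMap.proj (u - s)

theorem gradedLeftMul_apply (s : ZMod p) (f : ZMod p → F) (u : ZMod p) :
    gradedLeftMul N s f u = N s (u - s) * f (u - s) := rfl

theorem gradedLeftMul_single (s t : ZMod p) :
    gradedLeftMul N s (Pi.single t 1) = N s t • Pi.single (s + t) 1 := by
  ext u
  rw [gradedLeftMul_apply]
  by_cases h : u = s + t
  · subst h; simp
  · have : u - s ≠ t := fun h' => h (by rw [← h']; ring)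
    simp [h, this]

theorem gradedLeftMul_pow_apply (s : ZMod p) (k : ℕ) (f : ZMod p → F) (u : ZMod p) :
    (gradedLeftMul N s ^ k) f u
      = (∏ j ∈ Finset.range k, N s (u - (j + 1) * s)) * f (u - k * s) := by
  induction k generalizing f with
  | zero => simp
  | succ k ih =>
    rw [pow_succ, Module.End.mul_apply, ih, gradedLeftMul_apply, Finset.prod_range_succ]
    have : u - k * s - s = u - ((k : ZMod p) + 1) * s := by ring
    rw [this]; push_cast; ring

theorem gradedLeftMul_pow_eq_zero (h0 : ∀ s, N s 0 = 0) (h0' : ∀ t, N 0 t = 0) (s : ZMod p) :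
    gradedLeftMul N s ^ p = 0 := by
  ext1 f
  refine LinearMap.ext fun g => ?_
  funext u
  rw [LinearMap.comp_apply, LinearMap.comp_apply, gradedLeftMul_pow_apply]
  simp only [LinearMap.zero_apply, Pi.zero_apply]
  by_cases hs : s = 0
  · subst hs
    rw [Finset.prod_eq_zero (Finset.mem_range.2 (Fact.out : p.Prime).pos) (h0' _), zero_mul]
  · rw [Finset.prod_eq_zero (i := (u / s - 1).val) (Finset.mem_range.2 (ZMod.val_lt _)), zero_mul]
    rw [ZMod.natCast_zmod_val]
    have : u - (u / s - 1 + 1) * s = 0 := by field_simp; ring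
    rw [this, h0]

/-- If every vertex of `Y` can be moved inside `Y` by an operator with index in `T`, then
the operators with index in `T` do not generate a nilpotent algebra. -/
theorem gradedLeftMul_pow_ne_bot (T Y : Set (ZMod p)) (hY : Y.Nonempty)
    (h : ∀ y ∈ Y, ∃ a ∈ T, N a y ≠ 0 ∧ a + y ∈ Y) (n : ℕ) :
    Submodule.span F (gradedLeftMul N '' T) ^ n ≠ ⊥ := by
  obtain ⟨y₀, hy₀⟩ := hY
  have key : ∀ n : ℕ, ∃ w ∈ Submodule.span F (gradedLeftMul N '' T) ^ n, ∃ y ∈ Y, ∃ c : F, c ≠ 0 ∧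
      w (Pi.single y₀ 1) = c • Pi.single y 1 := by
    intro n
    induction n with
    | zero =>
      exact ⟨1, by rw [pow_zero]; exact Submodule.one_le.1 le_rfl, y₀, hy₀, 1, one_ne_zero, by simp⟩
    | succ n ih =>
      obtain ⟨w, hw, y, hy, c, hc, e⟩ := ih
      obtain ⟨a, ha, hN, hay⟩ := h y hy
      refine ⟨gradedLeftMul N a * w, ?_, a + y, hay, c * N a y, mul_ne_zero hc hN, ?_⟩
      · rw [pow_succ']
        exact Submodule.mul_mem_mul (Submodule.subset_span ⟨a, ha, rfl⟩) hw
      · rw [Module.End.mul_apply, e, map_smul, gradedLeftMul_single, smul_smul]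
  intro hbot
  obtain ⟨w, hw, y, -, c, hc, e⟩ := key n
  rw [hbot, Submodule.mem_bot] at hw
  subst hw
  have := congrFun e y
  simp at this
  exact hc this.symm

/-- A `ZMod p`-graded Lie algebra with one-dimensional components and vanishing component of
degree `0` is nilpotent: there is no nonempty set of degrees in which one can move forever. -/
theorem not_exists_cycle_of_jacobi (h0 : ∀ s, N s 0 = 0) (h0' : ∀ t, N 0 t = 0)
    (hJ : ∀ s t u, N t u * N s (t + u) - N s u * N t (s + u) = N s t * N (s + t) u)
    (Y : Set (ZMod p)) (hY : Y.Nonempty) :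
    ¬ ∀ y ∈ Y, ∃ a, N a y ≠ 0 ∧ a + y ∈ Y := by
  intro h
  have hcomm : ∀ s t, gradedLeftMul N s * gradedLeftMul N t - gradedLeftMul N t * gradedLeftMul N s
      = N s t • gradedLeftMul N (s + t) := by
    intro s t
    refine LinearMap.pi_ext' fun u => LinearMap.ext_ring ?_
    simp only [LinearMap.comp_apply, LinearMap.coe_single, LinearMap.sub_apply,
      Module.End.mul_apply, gradedLeftMul_single, map_smul, LinearMap.smul_apply, smul_smul]
    rw [← hJ, sub_smul, add_left_comm t s u, add_assoc s t u]
  let S : Set (Set (ZMod p)) := {T | ∃ n, Submodule.span F (gradedLeftMul N '' T) ^ n = ⊥}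
  have hS : S.Nonempty := ⟨∅, 1, by simp⟩
  obtain ⟨T, hT⟩ := (Set.toFinite S).exists_maximal hS
  obtain ⟨n, hn⟩ := hT.prop
  by_cases hTu : T = Set.univ
  · exact gradedLeftMul_pow_ne_bot N T Y hY (fun y hy => by
      obtain ⟨a, ha⟩ := h y hy
      exact ⟨a, hTu ▸ Set.mem_univ a, ha⟩) n hn
  · have hne : (Tᶜ).Nonempty := Set.nonempty_compl.2 hTu
    have : ¬ ∀ y ∈ Tᶜ, ∃ a ∈ T, N a y ≠ 0 ∧ a + y ∈ Tᶜ :=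
      fun H => gradedLeftMul_pow_ne_bot N T _ hne H n hn
    push Not at this
    obtain ⟨x, hx, hxT⟩ := this
    refine hx (hT.le_of_ge (y := insert x T) ?_ (Set.subset_insert x T) (Set.mem_insert x T))
    obtain ⟨k, hk⟩ := Submodule.exists_pow_sup_span_singleton_eq_bot _ hn (gradedLeftMul N x)
      (gradedLeftMul_pow_eq_zero N h0 h0' x) (by
        intro y hy
        induction hy using Submodule.span_induction with
        | mem y hy =>
          obtain ⟨a, ha, rfl⟩ := hy
          rw [← neg_sub, hcomm]
          refine neg_mem ?_
          by_cases hN : N a x = 0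
          · rw [hN, zero_smul]; exact zero_mem _
          · refine Submodule.smul_mem _ _ (Submodule.subset_span ⟨_, ?_, rfl⟩)
            by_contra hc
            exact hxT a ha hN hc
        | zero => simp
        | add a b _ _ ha hb =>
          have := add_mem ha hb
          convert this using 1
          noncomm_ring
        | smul c a _ ha =>
          have := Submodule.smul_mem _ c ha
          rwa [smul_sub, ← mul_smul_comm, ← smul_mul_assoc] at this)
    refine ⟨k, ?_⟩
    rwa [Set.image_insert_eq, Submodule.span_insert, sup_comm]
end

section
open scoped NNReal
variable {K : Type*} [Field K] {p : ℕ} [Fact p.Prime]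

/-- Quantitative version of `not_exists_cycle_of_jacobi`: if the structure constants of maximal
valuation `M` allow an infinite walk, then some Jacobi expression has the maximal possible
valuation `M ^ 2`. -/
theorem exists_le_valuation_jacobi {Γ : Type*} [LinearOrderedCommGroupWithZero Γ]
    (v : Valuation K Γ) (N : ZMod p → ZMod p → K) (M : Γ) (hM : M ≠ 0)
    (hNM : ∀ s t, v (N s t) ≤ M) (hanti : ∀ s t, N t s = - N s t)
    (h0 : ∀ s, N s 0 = 0)
    (Y : Set (ZMod p)) (hY : Y.Nonempty) (hcyc : ∀ y ∈ Y, ∃ a, v (N a y) = M ∧ a + y ∈ Y) :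
    ∃ s t u, M ^ 2 ≤ v (N s t * N (s + t) u + N t u * N (t + u) s + N u s * N (u + s) t) := by
  by_contra! hcon
  obtain ⟨y₀, hy₀⟩ := hY
  obtain ⟨a₀, ha₀, -⟩ := hcyc y₀ hy₀
  set g := N a₀ y₀ with hg
  have hg0 : g ≠ 0 := (v.ne_zero_iff).1 (by rw [ha₀]; exact hM)
  have hint : ∀ s t, v (N s t / g) ≤ 1 := fun s t => by
    rw [map_div₀, ha₀]
    exact div_le_one_of_le₀ (hNM s t) zero_le
  let n : ZMod p → ZMod p → v.valuationSubring := fun s t => ⟨N s t / g, hint s t⟩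
  let f := IsLocalRing.residue v.valuationSubring
  have hf : ∀ x : v.valuationSubring, f x = 0 ↔ v (x : K) < 1 := fun x => by
    rw [IsLocalRing.residue_eq_zero_iff]
    exact v.mem_maximalIdeal_iff
  have hnanti : ∀ s t, n t s = - n s t := fun s t => by
    ext; simp [n, hanti s t, neg_div]
  have hn0 : ∀ s, n s 0 = 0 := fun s => by ext; simp [n, h0]
  refine not_exists_cycle_of_jacobi (fun s t => f (n s t)) (fun s => by simp [hn0])
    (fun t => by rw [hnanti t 0, hn0]; simp) ?_ Y ⟨y₀, hy₀⟩ ?_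
  · intro s t u
    have h1 : f (n s t * n (s + t) u + n t u * n (t + u) s + n u s * n (u + s) t) = 0 := by
      rw [hf]
      have e : ((n s t * n (s + t) u + n t u * n (t + u) s + n u s * n (u + s) t :
          v.valuationSubring) : K)
          = (N s t * N (s + t) u + N t u * N (t + u) s + N u s * N (u + s) t) / g ^ 2 := by
        simp only [n]
        push_cast
        field_simp
      rw [e, map_div₀, map_pow, ha₀]
      exact (div_lt_one₀ (pow_pos (zero_lt_iff.2 hM) 2)).2 (hcon s t u)
    rw [hnanti s (t + u), hnanti s u, hnanti t (u + s), add_comm u s] at h1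
    simp only [map_add, map_mul, map_neg] at h1
    linear_combination -h1
  · intro y hy
    obtain ⟨a, ha, hay⟩ := hcyc y hy
    refine ⟨a, fun h => ?_, hay⟩
    rw [hf] at h
    simp only [n, map_div₀, ha, ha₀, div_self hM, lt_irrefl] at h

end

section
open scoped NNReal
open Polynomial

/-- The `p`-th cyclotomic polynomial is irreducible over `ℚ_[p]`. -/
theorem Padic.irreducible_cyclotomic (p : ℕ) [hp : Fact p.Prime] :
    Irreducible (cyclotomic p ℚ_[p]) := by
  have hE := cyclotomic_comp_X_add_one_isEisensteinAt p
  have hmonic : ((cyclotomic p ℤ_[p]).comp (X + C 1)).Monic :=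
    (cyclotomic.monic p ℤ_[p]).comp_X_add_C 1
  have hmap : ((cyclotomic p ℤ).comp (X + 1)).map (Int.castRingHom ℤ_[p])
      = (cyclotomic p ℤ_[p]).comp (X + C 1) := by
    rw [Polynomial.map_comp, map_cyclotomic]; simp
  have hdeg : ((cyclotomic p ℤ).comp (X + 1)).natDegree
      = ((cyclotomic p ℤ_[p]).comp (X + C 1)).natDegree := by
    rw [← map_one C, natDegree_comp, natDegree_comp, natDegree_cyclotomic, natDegree_cyclotomic,
      natDegree_X_add_C, natDegree_X_add_C]
  have hE' : ((cyclotomic p ℤ_[p]).comp (X + C 1)).IsEisensteinAt (Ideal.span {(p : ℤ_[p])}) := by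
    refine hmonic.isEisensteinAt_of_mem_of_notMem ?_ ?_ ?_
    · rw [← PadicInt.maximalIdeal_eq_span_p]; exact (IsLocalRing.maximalIdeal.isMaximal _).ne_top
    · intro n hn
      have := hE.mem (n := n) (by rw [hdeg]; exact hn)
      rw [← hmap, coeff_map]
      obtain ⟨c, hc⟩ := Submodule.mem_span_singleton.1 this
      rw [← hc, Ideal.mem_span_singleton]
      exact ⟨(c : ℤ_[p]), by simp [mul_comm]⟩
    · rw [Ideal.span_singleton_pow, Ideal.mem_span_singleton, ← hmap, coeff_map]
      intro h
      apply hE.notMem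
      have h2 : ((p : ℤ_[p]) ^ 2 ∣ ((((cyclotomic p ℤ).comp (X + 1)).coeff 0 : ℤ) : ℤ_[p])) := by
        simpa using h
      rw [PadicInt.pow_p_dvd_int_iff] at h2
      rw [show Submodule.span ℤ {(p : ℤ)} = Ideal.span {(p : ℤ)} from rfl,
        Ideal.span_singleton_pow, Ideal.mem_span_singleton]
      exact_mod_cast h2
  have hprime : (Ideal.span {(p : ℤ_[p])}).IsPrime := by
    rw [← PadicInt.maximalIdeal_eq_span_p]; infer_instance
  have hirr : Irreducible ((cyclotomic p ℤ_[p]).comp (X + C 1)) :=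
    hE'.irreducible hprime hmonic.isPrimitive (by
      rw [natDegree_comp, natDegree_X_add_C, natDegree_cyclotomic, mul_one]
      exact Nat.totient_pos.2 hp.out.pos)
  have h1 : Irreducible (cyclotomic p ℤ_[p]) := by
    have e : (cyclotomic p ℤ_[p]).comp (X + C 1)
        = algEquivAevalXAddC (1 : ℤ_[p]) (cyclotomic p ℤ_[p]) := by
      rw [algEquivAevalXAddC_apply, comp, aeval_def]; rfl
    rw [e] at hirr
    exact (MulEquiv.irreducible_iff (algEquivAevalXAddC (1 : ℤ_[p]))).1 hirr
  have := ((cyclotomic.monic p ℤ_[p]).irreducible_iff_irreducible_map_fraction_map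
    (K := ℚ_[p])).1 h1
  rwa [map_cyclotomic] at this

/-- The spectral norm on an algebraic extension of `ℚ_[p]`, as a valuation. -/
noncomputable def spectralValuation (p : ℕ) [Fact p.Prime] (K : Type*) [Field K] [Algebra ℚ_[p] K]
    [Algebra.IsAlgebraic ℚ_[p] K] : Valuation K ℝ≥0 where
  toFun x := ⟨spectralNorm ℚ_[p] K x, spectralNorm_nonneg x⟩
  map_zero' := by ext; exact spectralNorm_zero
  map_one' := by ext; exact spectralNorm_one
  map_mul' x y := by ext; exact spectralAlgNorm_mul x y
  map_add_le_max' x y := by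
    have := isNonarchimedean_spectralNorm (K := ℚ_[p]) (L := K) x y
    exact (le_max_iff.1 this).elim le_max_of_le_left le_max_of_le_right

variable (p : ℕ) [Fact p.Prime] {K : Type*} [Field K] [Algebra ℚ_[p] K]
    [Algebra.IsAlgebraic ℚ_[p] K]

theorem coe_spectralValuation (x : K) :
    (spectralValuation p K x : ℝ) = spectralNorm ℚ_[p] K x := rfl

theorem spectralValuation_algEquiv (σ : K ≃ₐ[ℚ_[p]] K) (x : K) :
    spectralValuation p K (σ x) = spectralValuation p K x := by
  ext; exact (spectralNorm_eq_of_equiv σ x).symm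

theorem spectralValuation_le_one_iff [Algebra ℤ_[p] K] [IsScalarTower ℤ_[p] ℚ_[p] K] (x : K) :
    spectralValuation p K x ≤ 1 ↔ IsIntegral ℤ_[p] x := by
  have hx : IsIntegral ℚ_[p] x := Algebra.IsIntegral.isIntegral x
  rw [← NNReal.coe_le_coe, coe_spectralValuation, NNReal.coe_one, spectralNorm,
    spectralValue_le_one_iff (minpoly.monic hx)]
  constructor
  · intro h
    have hl : minpoly ℚ_[p] x ∈ Polynomial.lifts (algebraMap ℤ_[p] ℚ_[p]) :=
      (Polynomial.lifts_iff_coeff_lifts _).2 fun n => ⟨⟨_, h n⟩, rfl⟩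
    obtain ⟨q, hq, -, hm⟩ := Polynomial.lifts_and_natDegree_eq_and_monic hl (minpoly.monic hx)
    refine ⟨q, hm, ?_⟩
    rw [IsScalarTower.algebraMap_eq ℤ_[p] ℚ_[p] K, ← Polynomial.eval₂_map, hq]
    exact minpoly.aeval _ _
  · intro h n
    rw [minpoly.isIntegrallyClosed_eq_field_fractions' ℚ_[p] h, coeff_map]
    exact PadicInt.norm_le_one _
end

section
variable {p : ℕ} [Fact p.Prime] {K : Type*} [Field K]

/-- Fourier inversion on `ZMod p`: recovering the coefficients of a trigonometric polynomial. -/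
theorem AddChar.sum_neg_mul_sum (ψ : AddChar (ZMod p) K) (hψ : ψ.IsPrimitive) (D : ZMod p → K)
    (s : ZMod p) : ∑ k, ψ (-(s * k)) * ∑ t, D t * ψ (t * k) = p * D s := by
  simp_rw [Finset.mul_sum]
  rw [Finset.sum_comm]
  have : ∀ t, ∑ k, ψ (-(s * k)) * (D t * ψ (t * k)) = D t * if t - s = 0 then (p : K) else 0 := by
    intro t
    have h := AddChar.sum_mulShift (t - s) hψ
    rw [ZMod.card] at h
    push_cast at h
    rw [← h, Finset.mul_sum]
    refine Finset.sum_congr rfl fun k _ => ?_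
    rw [mul_left_comm, ← AddChar.map_add_eq_mul]
    congr 2; ring
  simp_rw [this, sub_eq_zero]
  simp [mul_comm]

/-- Fourier expansion of a function on `ZMod p`. -/
theorem AddChar.sum_sum_neg_mul_mul (ψ : AddChar (ZMod p) K) (hψ : ψ.IsPrimitive) (g : ZMod p → K)
    (k : ZMod p) : ∑ s, (∑ j, ψ (-(s * j)) * g j) * ψ (s * k) = p * g k := by
  simp_rw [Finset.sum_mul]
  rw [Finset.sum_comm]
  have : ∀ j, ∑ s, ψ (-(s * j)) * g j * ψ (s * k) = g j * if k - j = 0 then (p : K) else 0 := by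
    intro t
    have h := AddChar.sum_mulShift (k - t) hψ
    rw [ZMod.card] at h
    push_cast at h
    rw [← h, Finset.mul_sum]
    refine Finset.sum_congr rfl fun k _ => ?_
    rw [mul_right_comm, ← AddChar.map_add_eq_mul, mul_comm]
    congr 2; ring
  simp_rw [this, sub_eq_zero]
  simp [mul_comm]

theorem ZMod.sum_sum_cyclic {A : Type*} [AddCommMonoid A] (g : ZMod p → ZMod p → ZMod p → A) :
    ∑ s, ∑ t, g s t (1 - s - t) = ∑ s, ∑ t, g t (1 - s - t) s := by
  rw [Finset.sum_comm (f := fun s t => g t (1 - s - t) s)]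
  refine Finset.sum_congr rfl fun s _ => ?_
  refine Fintype.sum_equiv (Equiv.subLeft (1 - s)) _ _ fun t => ?_
  simp only [Equiv.subLeft_apply]
  congr 1
  ring
end

section
variable {p : ℕ} [Fact p.Prime] {K : Type*} [Field K] [Algebra ℚ_[p] K]

/-- `τ b`, for `b ≠ 0` in `ZMod p`, is the automorphism of `K = ℚ_[p](θ)` with `θ ↦ θ ^ b`, while
`τ 0 = 0`. -/
structure IsConjugateFamily (θ : K) (τ : ZMod p → K →ₙₐ[ℚ_[p]] K) : Prop where
  zero : ∀ x, τ 0 x = 0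
  one : ∀ x, τ 1 x = x
  mul : ∀ a b x, τ a (τ b x) = τ (a * b) x
  root : ∀ b ≠ 0, ∀ n : ℕ, τ b (θ ^ n) = θ ^ (b.val * n)
  isAut : ∀ b ≠ 0, ∃ σ : K ≃ₐ[ℚ_[p]] K, ∀ x, τ b x = σ x

theorem exists_isConjugateFamily {θ : K} (hθ : IsPrimitiveRoot θ p)
    (hgen : Algebra.adjoin ℚ_[p] {θ} = ⊤) :
    ∃ τ : ZMod p → K →ₙₐ[ℚ_[p]] K, IsConjugateFamily θ τ := by
  have : IsCyclotomicExtension {p} ℚ_[p] K := by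
    refine (IsCyclotomicExtension.iff_singleton p ℚ_[p] K).2 ⟨⟨θ, hθ⟩, fun x => ?_⟩
    have hx : x ∈ Algebra.adjoin ℚ_[p] {θ} := hgen ▸ Algebra.mem_top
    exact Algebra.adjoin_mono (by simpa using hθ.pow_eq_one) hx
  let e := IsCyclotomicExtension.autEquivPow K (Padic.irreducible_cyclotomic p)
  have he : ∀ (b : (ZMod p)ˣ), e.symm b θ = θ ^ (b : ZMod p).val := by
    intro b
    have h1 : IsCyclotomicExtension.zeta p ℚ_[p] K ^ (b : ZMod p).val
        = e.symm b (IsCyclotomicExtension.zeta p ℚ_[p] K) := by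
      have := (IsCyclotomicExtension.zeta_spec p ℚ_[p] K).autToPow_spec ℚ_[p] (e.symm b)
      rw [← this]
      congr 2
      exact congrArg Units.val (e.apply_symm_apply b).symm
    obtain ⟨k, -, hk⟩ := (IsCyclotomicExtension.zeta_spec p ℚ_[p] K).eq_pow_of_pow_eq_one
      hθ.pow_eq_one
    rw [← hk, map_pow, ← h1, ← pow_mul, ← pow_mul, mul_comm]
  let τ : ZMod p → K →ₙₐ[ℚ_[p]] K := fun b =>
    if h : b = 0 then 0 else ((e.symm (Units.mk0 b h) : K →ₐ[ℚ_[p]] K) : K →ₙₐ[ℚ_[p]] K)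
  have hτ : ∀ (b : ZMod p) (h : b ≠ 0) (x : K), τ b x = e.symm (Units.mk0 b h) x := by
    intro b h x
    simp only [τ, dif_neg h]
    rfl
  have hτ0 : ∀ x, τ 0 x = 0 := by intro x; simp [τ]
  refine ⟨τ, hτ0, fun x => ?_, fun a b x => ?_, fun b hb n => ?_, fun b hb => ⟨_, hτ b hb⟩⟩
  · rw [hτ 1 one_ne_zero, Units.mk0_one, map_one]; rfl
  · by_cases ha : a = 0
    · rw [ha, zero_mul, hτ0, hτ0]
    · by_cases hb : b = 0
      · rw [hb, mul_zero, hτ0, map_zero]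
      · rw [hτ a ha, hτ b hb, hτ _ (mul_ne_zero ha hb), Units.mk0_mul, map_mul]; rfl
  · rw [hτ b hb, map_pow, he, ← pow_mul]; rfl

namespace IsConjugateFamily

variable {θ : K} {τ : ZMod p → K →ₙₐ[ℚ_[p]] K}

theorem valuation_eq (hτ : IsConjugateFamily θ τ)
    [Algebra.IsAlgebraic ℚ_[p] K] {b : ZMod p} (hb : b ≠ 0) (x : K) :
    spectralValuation p K (τ b x) = spectralValuation p K x := by
  obtain ⟨σ, hσ⟩ := hτ.isAut b hb
  rw [hσ, spectralValuation_algEquiv]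

theorem valuation_le (hτ : IsConjugateFamily θ τ)
    [Algebra.IsAlgebraic ℚ_[p] K] (b : ZMod p) (x : K) :
    spectralValuation p K (τ b x) ≤ spectralValuation p K x := by
  by_cases hb : b = 0
  · rw [hb, hτ.zero, map_zero]; exact zero_le
  · exact (hτ.valuation_eq hb x).le

theorem spectralValuation_sub_one_pow (hτ : IsConjugateFamily θ τ)
    [Algebra.IsAlgebraic ℚ_[p] K] (hθ : IsPrimitiveRoot θ p) :
    spectralValuation p K (θ - 1) ^ (p - 1) = spectralValuation p K (p : K) := by
  obtain ⟨n, hn⟩ : ∃ n, p = n + 1 := ⟨p - 1, by have := (Fact.out : p.Prime).pos; omega⟩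
  have h : IsPrimitiveRoot θ (n + 1) := hn ▸ hθ
  have hprod := h.prod_one_sub_pow_eq_order
  rw [show (n : K) + 1 = (p : K) by rw [hn]; push_cast; rfl] at hprod
  rw [← hprod, map_prod, Finset.prod_congr rfl (g := fun _ => spectralValuation p K (θ - 1))]
  · rw [Finset.prod_const, Finset.card_range, show n = p - 1 by omega]
  · intro k hk
    have hkp : k + 1 < p := by have := Finset.mem_range.1 hk; omega
    have hb : ((k + 1 : ℕ) : ZMod p) ≠ 0 := by
      rw [Ne, ZMod.natCast_eq_zero_iff]
      exact fun hd => absurd (Nat.le_of_dvd (Nat.succ_pos k) hd) (by omega)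
    rw [← hτ.valuation_eq hb (θ - 1), ← Valuation.map_neg]
    congr 1
    obtain ⟨σ, hσ⟩ := hτ.isAut _ hb
    have hr := hτ.root _ hb 1
    rw [pow_one, mul_one, ZMod.val_natCast_of_lt hkp] at hr
    rw [map_sub, hr, hσ 1, map_one]
    ring

variable (c : ZMod p → K)

variable (τ) in
/-- The structure constants of the bracket `∑ a, c a • (τ a x) (τ (1 - a) y)` with respect to the
basis of eigenvectors for multiplication by `θ`. -/
noncomputable def structConst (s t : ZMod p) : K := τ (s + t) (c (s / (s + t)))

theorem structConst_mul (hτ : IsConjugateFamily θ τ) {b : ZMod p} (hb : b ≠ 0) (s t : ZMod p) :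
    structConst τ c (b * s) (b * t) = τ b (structConst τ c s t) := by
  rw [structConst, structConst, hτ.mul, ← mul_add, mul_div_mul_left _ _ hb]

theorem structConst_swap (hτ : IsConjugateFamily θ τ) (hc : ∀ a, c (1 - a) = - c a) (s t : ZMod p) :
    structConst τ c t s = - structConst τ c s t := by
  rw [structConst, structConst, add_comm t s]
  by_cases h : s + t = 0
  · rw [h, hτ.zero, hτ.zero, neg_zero]
  · have : t / (s + t) = 1 - s / (s + t) := by field_simp; ring
    rw [this, hc, map_neg]

theorem structConst_zero_right (hτ : IsConjugateFamily θ τ)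
    (hc1 : c 1 = 0) (s : ZMod p) : structConst τ c s 0 = 0 := by
  rw [structConst, add_zero]
  by_cases h : s = 0
  · rw [h, hτ.zero]
  · rw [div_self h, hc1, map_zero]

theorem structConst_one_sub (hτ : IsConjugateFamily θ τ)
    (b : ZMod p) : structConst τ c b (1 - b) = c b := by
  rw [structConst, add_sub_cancel, div_one, hτ.one]

theorem sum_sum_bracket (hτ : IsConjugateFamily θ τ) (hc0 : c 0 = 0) (x y z : K) :
    ∑ b, c b * τ b (∑ a, c a * τ a x * τ (1 - a) y) * τ (1 - b) z
      = ∑ s, ∑ t, structConst τ c s t * structConst τ c (s + t) (1 - s - t) *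
          (τ s x * τ t y * τ (1 - s - t) z) := by
  have h1 : ∀ s, ∑ t, structConst τ c s t * structConst τ c (s + t) (1 - s - t) *
          (τ s x * τ t y * τ (1 - s - t) z)
      = ∑ b, structConst τ c s (b - s) * c b * (τ s x * τ (b - s) y * τ (1 - b) z) := by
    intro s
    refine Fintype.sum_equiv (Equiv.addLeft s) _ _ fun t => ?_
    simp only [Equiv.coe_addLeft, add_sub_cancel_left]
    rw [← hτ.structConst_one_sub c (s + t), sub_sub]
  simp_rw [h1]
  rw [Finset.sum_comm]
  refine Finset.sum_congr rfl fun b _ => ?_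
  by_cases hb : b = 0
  · subst hb; simp [hc0]
  · rw [map_sum, Finset.mul_sum, Finset.sum_mul]
    refine Fintype.sum_equiv (Equiv.mulLeft₀ b hb) _ _ fun a => ?_
    simp only [Equiv.mulLeft₀_apply, map_mul, hτ.mul]
    have : b - b * a = b * (1 - a) := by ring
    rw [this, hτ.structConst_mul c hb, hτ.structConst_one_sub]
    ring

variable (τ) in
/-- The Jacobi expression of three basis vectors. -/
noncomputable def jacobiConst (s t u : ZMod p) : K :=
  structConst τ c s t * structConst τ c (s + t) u + structConst τ c t u * structConst τ c (t + u) s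
    + structConst τ c u s * structConst τ c (u + s) t

theorem sum_sum_jacobi (hτ : IsConjugateFamily θ τ) (hc0 : c 0 = 0) (x y z : K) :
    (∑ b, c b * τ b (∑ a, c a * τ a x * τ (1 - a) y) * τ (1 - b) z)
      + (∑ b, c b * τ b (∑ a, c a * τ a y * τ (1 - a) z) * τ (1 - b) x)
      + (∑ b, c b * τ b (∑ a, c a * τ a z * τ (1 - a) x) * τ (1 - b) y)
      = ∑ s, ∑ t, jacobiConst τ c s t (1 - s - t) * (τ s x * τ t y * τ (1 - s - t) z) := by
  rw [hτ.sum_sum_bracket c hc0, hτ.sum_sum_bracket c hc0, hτ.sum_sum_bracket c hc0]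
  let F : K → K → K → ZMod p → ZMod p → ZMod p → K := fun x y z s t u =>
    structConst τ c s t * structConst τ c (s + t) u * (τ s x * τ t y * τ u z)
  have e2 := ZMod.sum_sum_cyclic (F y z x)
  have e3 := ZMod.sum_sum_cyclic (fun s t u => F z x y u s t)
  simp only [F] at e2 e3
  rw [e2, ← e3, ← Finset.sum_add_distrib, ← Finset.sum_add_distrib]
  refine Finset.sum_congr rfl fun s _ => ?_
  rw [← Finset.sum_add_distrib, ← Finset.sum_add_distrib]
  refine Finset.sum_congr rfl fun t _ => ?_
  rw [jacobiConst]
  ring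

theorem jacobiConst_mul (hτ : IsConjugateFamily θ τ) {b : ZMod p} (hb : b ≠ 0) (s t u : ZMod p) :
    jacobiConst τ c (b * s) (b * t) (b * u) = τ b (jacobiConst τ c s t u) := by
  simp only [jacobiConst, ← mul_add, hτ.structConst_mul c hb, map_add, map_mul]

/-- Some Jacobi coefficient is as large as the largest structure constant permits. -/
theorem exists_le_valuation_jacobiConst (hτ : IsConjugateFamily θ τ)
    [Algebra.IsAlgebraic ℚ_[p] K] (hc0 : c 0 = 0)
    (hc : ∀ a, c (1 - a) = - c a) {a : ZMod p} (ha : c a ≠ 0)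
    (hmax : ∀ b, spectralValuation p K (c b) ≤ spectralValuation p K (c a)) :
    ∃ s t, s ≠ 0 ∧ t ≠ 0 ∧ 1 - s - t ≠ 0 ∧
      spectralValuation p K (c a) ^ 2
        ≤ spectralValuation p K (jacobiConst τ c s t (1 - s - t)) := by
  have hc1 : c 1 = 0 := by have := hc 0; rwa [sub_zero, hc0, neg_zero] at this
  have hM : spectralValuation p K (c a) ≠ 0 := (Valuation.ne_zero_iff _).2 ha
  have ha1 : 1 - a ≠ 0 := fun h => ha (by rw [← sub_eq_zero.1 h, hc1])
  have hr := hτ.structConst_zero_right c hc1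
  have hl : ∀ t, structConst τ c 0 t = 0 := fun t => by
    rw [hτ.structConst_swap c hc, hr, neg_zero]
  have hs : ∀ s t, s + t = 0 → structConst τ c s t = 0 := fun s t h => by
    rw [structConst, h, hτ.zero]
  obtain ⟨s, t, u, h⟩ := exists_le_valuation_jacobi (spectralValuation p K) (structConst τ c) _ hM
    (fun s t => (hτ.valuation_le _ _).trans (hmax _)) (hτ.structConst_swap c hc) hr
    {0}ᶜ ⟨1, one_ne_zero⟩ (fun y hy => by
      have hy : y ≠ 0 := hy
      have hb : y / (1 - a) ≠ 0 := div_ne_zero hy ha1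
      refine ⟨y / (1 - a) * a, ?_, ?_⟩
      · have hy' : y = y / (1 - a) * (1 - a) := by field_simp
        conv_lhs => rw [hy']
        rw [mul_div_cancel_right₀ _ ha1, hτ.structConst_mul c hb, hτ.structConst_one_sub,
          hτ.valuation_eq hb]
      · have : y / (1 - a) * a + y = y / (1 - a) := by field_simp; ring
        rw [this]; exact hb)
  change _ ≤ spectralValuation p K (jacobiConst τ c s t u) at h
  have hne : jacobiConst τ c s t u ≠ 0 := by
    intro h0
    rw [h0, map_zero] at h
    exact pow_ne_zero 2 hM (le_antisymm h zero_le)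
  have hs0 : s ≠ 0 := by
    rintro rfl
    exact hne (by simp [jacobiConst, hr, hl, add_comm t u, hτ.structConst_swap c hc u t])
  have ht0 : t ≠ 0 := by
    rintro rfl
    exact hne (by simp [jacobiConst, hr, hl, hτ.structConst_swap c hc u s])
  have hu0 : u ≠ 0 := by
    rintro rfl
    exact hne (by simp [jacobiConst, hr, hl, add_comm s t, hτ.structConst_swap c hc t s])
  have hb : s + t + u ≠ 0 := by
    intro h0
    refine hne ?_
    rw [jacobiConst, hs (s + t) u h0, hs (t + u) s (by rw [← h0]; ring),
      hs (u + s) t (by rw [← h0]; ring)]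
    ring
  have hu : 1 - s / (s + t + u) - t / (s + t + u) = u / (s + t + u) := by field_simp; ring
  refine ⟨s / (s + t + u), t / (s + t + u), div_ne_zero hs0 hb, div_ne_zero ht0 hb,
    hu ▸ div_ne_zero hu0 hb, ?_⟩
  rw [hu, ← hτ.valuation_eq hb (jacobiConst _ _ _ _ _), ← hτ.jacobiConst_mul c hb,
    mul_div_cancel₀ _ hb, mul_div_cancel₀ _ hb, mul_div_cancel₀ _ hb]
  exact h

end IsConjugateFamily
end

section
open scoped NNReal

theorem NNReal.pow_mul_pow_le_of_mul_pow_le_one {p i : ℕ} (hp : 5 ≤ p) (hi : p ≤ i) {ρ M : ℝ≥0}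
    (hρ : ρ ≤ 1) (hM : M * ρ ^ (p - 2) ≤ 1) :
    ρ ^ (p * i + 1) * M ^ (p - 2) ≤ (ρ ^ (p - 1)) ^ 2 * (M ^ 2 * ρ ^ (3 * i)) := by
  obtain ⟨n, rfl⟩ := Nat.exists_eq_add_of_le hp
  obtain ⟨j, rfl⟩ := Nat.exists_eq_add_of_le hi
  have e1 : 5 + n - 2 = n + 3 := by omega
  have e2 : 5 + n - 1 = n + 4 := by omega
  rw [e1] at hM ⊢
  rw [e2]
  have e3 : (5 + n) * (5 + n + j) + 1
      = (n + 3) * (n + 1) + ((n + 4) * 2 + 3 * (5 + n + j)) + (n + (n + 2) * j) := by ring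
  calc ρ ^ ((5 + n) * (5 + n + j) + 1) * M ^ (n + 3)
      = (M * ρ ^ (n + 3)) ^ (n + 1) * ρ ^ (n + (n + 2) * j)
          * ((ρ ^ (n + 4)) ^ 2 * (M ^ 2 * ρ ^ (3 * (5 + n + j)))) := by
        rw [e3]; ring
    _ ≤ 1 * 1 * ((ρ ^ (n + 4)) ^ 2 * (M ^ 2 * ρ ^ (3 * (5 + n + j)))) := by
        gcongr
        · exact pow_le_one₀ zero_le hM
        · exact pow_le_one₀ zero_le hρ
    _ = _ := by rw [one_mul, one_mul]
end

namespace MaximalClassFrame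

variable (p : ℕ) [Fact p.Prime]
variable (K : Type) [Field K] [Algebra ℚ_[p] K] [Algebra ℤ_[p] K]
  [IsScalarTower ℤ_[p] ℚ_[p] K]
variable (θ : 𝒪 p K)
variable (γ : 𝒪 p K →ₗ[ℤ_[p]] 𝒪 p K →ₗ[ℤ_[p]] 𝒪 p K)

section

variable {p K θ γ}

theorem isAlgebraic_of_adjoin_eq_top (hgen : Algebra.adjoin ℚ_[p] {(θ : K)} = ⊤) :
    Algebra.IsAlgebraic ℚ_[p] K := by
  have hθ : IsIntegral ℚ_[p] (θ : K) := IsIntegral.tower_top (R := ℤ_[p]) θ.2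
  refine ⟨fun x => ?_⟩
  have hx : x ∈ Algebra.adjoin ℚ_[p] {(θ : K)} := hgen ▸ Algebra.mem_top
  exact IsIntegral.isAlgebraic (adjoin_le_integralClosure hθ hx)

/-- A `ℤ_[p]`-linear map on the maximal order is determined by its values on powers of `θ`. -/
theorem eq_zero_of_forall_addChar (hgen : Algebra.adjoin ℚ_[p] {(θ : K)} = ⊤)
    (ψ : AddChar (ZMod p) (𝒪 p K)) (hψ : ψ 1 = θ) (h : 𝒪 p K →ₗ[ℤ_[p]] K)
    (h0 : ∀ k, h (ψ k) = 0) : h = 0 := by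
  have hinj : Function.Injective (algebraMap ℤ_[p] K) := by
    rw [IsScalarTower.algebraMap_eq ℤ_[p] ℚ_[p] K]
    exact (algebraMap ℚ_[p] K).injective.comp (IsFractionRing.injective ℤ_[p] ℚ_[p])
  set P : Submodule ℤ_[p] (𝒪 p K) := Submodule.span ℤ_[p] (Set.range ψ) with hP
  have hPP : ∀ x ∈ P, ∀ y ∈ P, x * y ∈ P := by
    intro x hx y hy
    have : P * P ≤ P := by
      rw [hP, Submodule.span_mul_span]
      refine Submodule.span_mono ?_
      rintro _ ⟨_, ⟨a, rfl⟩, _, ⟨b, rfl⟩, rfl⟩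
      exact ⟨a + b, ψ.map_add_eq_mul a b⟩
    exact this (Submodule.mul_mem_mul hx hy)
  have hker : ∀ x ∈ P, h x = 0 := by
    intro x hx
    have : P ≤ LinearMap.ker h := Submodule.span_le.2 (by rintro _ ⟨k, rfl⟩; exact h0 k)
    exact this hx
  have key : ∀ x : K, ∃ a : ℤ_[p], a ≠ 0 ∧ ∃ y ∈ P, (y : K) = algebraMap ℤ_[p] K a * x := by
    intro x
    have hx : x ∈ Algebra.adjoin ℚ_[p] {(θ : K)} := hgen ▸ Algebra.mem_top
    induction hx using Algebra.adjoin_induction with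
    | mem x hx =>
      rw [Set.mem_singleton_iff] at hx
      exact ⟨1, one_ne_zero, θ, Submodule.subset_span ⟨1, hψ⟩, by simp [hx]⟩
    | algebraMap r =>
      obtain ⟨⟨a, ha⟩, z, hz⟩ := IsLocalization.exists_integer_multiple (nonZeroDivisors ℤ_[p]) r
      refine ⟨a, nonZeroDivisors.ne_zero ha, z • 1,
        Submodule.smul_mem _ _ (Submodule.subset_span ⟨0, ψ.map_zero_eq_one⟩), ?_⟩
      have h1 : algebraMap ℤ_[p] ℚ_[p] z = algebraMap ℤ_[p] ℚ_[p] a * r := by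
        rw [hz, Algebra.smul_def]
      have h2 := congrArg (algebraMap ℚ_[p] K) h1
      rw [map_mul, ← IsScalarTower.algebraMap_apply, ← IsScalarTower.algebraMap_apply] at h2
      rw [← h2, Algebra.algebraMap_eq_smul_one]
      rfl
    | add x y _ _ hx hy =>
      obtain ⟨a, ha, x', hx', ex⟩ := hx
      obtain ⟨b, hb, y', hy', ey⟩ := hy
      refine ⟨a * b, mul_ne_zero ha hb, b • x' + a • y',
        add_mem (Submodule.smul_mem _ _ hx') (Submodule.smul_mem _ _ hy'), ?_⟩
      rw [Subalgebra.coe_add, Subalgebra.coe_smul, Subalgebra.coe_smul, Algebra.smul_def,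
        Algebra.smul_def, ex, ey, map_mul]
      ring
    | mul x y _ _ hx hy =>
      obtain ⟨a, ha, x', hx', ex⟩ := hx
      obtain ⟨b, hb, y', hy', ey⟩ := hy
      refine ⟨a * b, mul_ne_zero ha hb, x' * y', hPP _ hx' _ hy', ?_⟩
      rw [Subalgebra.coe_mul, ex, ey, map_mul]
      ring
  refine LinearMap.ext fun x => ?_
  obtain ⟨a, ha, y, hy, e⟩ := key (x : K)
  have hxy : y = a • x := by
    apply Subtype.ext
    rw [e, ← Algebra.smul_def]
    rfl
  have h1 := hker y hy
  rw [hxy, map_smul, Algebra.smul_def, mul_eq_zero] at h1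
  exact h1.resolve_left ((map_ne_zero_iff _ hinj).2 ha)

theorem map_padicInt_smul (τ : K →ₙₐ[ℚ_[p]] K) (a : ℤ_[p]) (x : K) : τ (a • x) = a • τ x := by
  rw [← algebraMap_smul ℚ_[p] a x, map_smul, algebraMap_smul]

theorem IsPEquivariant.swap (hγ : IsPEquivariant p K θ γ) (x y : 𝒪 p K) : γ y x = - γ x y := by
  have := hγ.1 (x + y)
  simp only [map_add, LinearMap.add_apply, hγ.1, zero_add, add_zero] at this
  exact eq_neg_of_add_eq_zero_left this

theorem IsPEquivariant.pow (hγ : IsPEquivariant p K θ γ) (n : ℕ) (x y : 𝒪 p K) :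
    γ (θ ^ n * x) (θ ^ n * y) = θ ^ n * γ x y := by
  induction n with
  | zero => simp
  | succ n ih => rw [pow_succ', mul_assoc, mul_assoc, hγ.2, ih, mul_assoc]

/-- A `P`-equivariant map is a combination of the products `τ a x * τ (1 - a) y` of conjugates. -/
theorem IsPEquivariant.exists_coeff (hγ : IsPEquivariant p K θ γ)
    (hgen : Algebra.adjoin ℚ_[p] {(θ : K)} = ⊤) (ψ : AddChar (ZMod p) (𝒪 p K))
    (hψ : ψ.IsPrimitive) (hψθ : ∀ k, ψ k = θ ^ k.val) (hψ1 : ψ 1 = θ)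
    (τ : ZMod p → K →ₙₐ[ℚ_[p]] K)
    (hτψ : ∀ b ≠ 0, ∀ k, τ b (ψ k : K) = ψ (b * k)) :
    ∃ c : ZMod p → K, c 0 = 0 ∧ (∀ a, c (1 - a) = - c a) ∧
      ∀ x y : 𝒪 p K, (γ x y : K) = ∑ s, c s * τ s x * τ (1 - s) y := by
  have : CharZero K := charZero_of_injective_algebraMap (algebraMap ℚ_[p] K).injective
  have hp0 : (p : K) ≠ 0 := Nat.cast_ne_zero.2 (Fact.out : p.Prime).ne_zero
  let Ψ : AddChar (ZMod p) K := (algebraMap (𝒪 p K) K : 𝒪 p K →* K).compAddChar ψ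
  have hΨ : ∀ k, Ψ k = (ψ k : K) := fun k => rfl
  have hΨp : Ψ.IsPrimitive := by
    intro a ha h
    refine hψ ha ?_
    ext k
    have := DFunLike.congr_fun h k
    exact this
  have hequiv : ∀ k x y, γ (ψ k * x) (ψ k * y) = ψ k * γ x y := fun k x y => by
    rw [hψθ, hγ.pow]
  set g : ZMod p → K := fun k => (γ (ψ k) 1 : K) with hg
  set c : ZMod p → K := fun s => (p : K)⁻¹ * ∑ k, Ψ (-(s * k)) * g k with hc
  have hg' : ∀ k, g k = - (Ψ k * g (-k)) := by
    intro k
    have h1 : γ (ψ k) 1 = - (ψ k * γ (ψ (-k)) 1) := by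
      rw [← hequiv, ← ψ.map_add_eq_mul, add_neg_cancel, ψ.map_zero_eq_one, mul_one, hγ.swap]
    simp only [hg, h1, hΨ]
    push_cast
    ring
  have hexp : ∀ k, ∑ s, c s * Ψ (s * k) = g k := by
    intro k
    simp only [hc]
    simp_rw [mul_assoc]
    rw [← Finset.mul_sum, Ψ.sum_sum_neg_mul_mul hΨp, inv_mul_cancel_left₀ hp0]
  have hc0 : c 0 = 0 := by
    have h1 : ∑ k, ψ k = 0 := by
      have := AddChar.sum_mulShift (1 : ZMod p) hψ
      simpa using this
    have h2 : ∑ k, g k = 0 := by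
      have : ((γ (∑ k, ψ k) 1 : 𝒪 p K) : K) = 0 := by rw [h1]; simp
      rw [map_sum, LinearMap.sum_apply] at this
      push_cast at this
      exact this
    simp [hc, h2]
  have hca : ∀ a, c (1 - a) = - c a := by
    intro a
    simp only [hc]
    rw [← mul_neg, ← Finset.sum_neg_distrib]
    congr 1
    refine Fintype.sum_equiv (Equiv.neg _) _ _ fun k => ?_
    rw [Equiv.neg_apply, hg' k, mul_neg, ← mul_assoc, ← Ψ.map_add_eq_mul]
    congr 3
    ring
  have hc1 : c 1 = 0 := by have := hca 0; rwa [sub_zero, hc0, neg_zero] at this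
  refine ⟨c, hc0, hca, ?_⟩
  have hbase : ∀ k l, (γ (ψ k) (ψ l) : K) = ∑ s, c s * τ s (ψ k : K) * τ (1 - s) (ψ l : K) := by
    intro k l
    have h1 : γ (ψ k) (ψ l) = ψ l * γ (ψ (k - l)) 1 := by
      rw [← hequiv, ← ψ.map_add_eq_mul, add_sub_cancel, mul_one]
    rw [h1]
    push_cast
    change Ψ l * g (k - l) = _
    rw [← hexp, Finset.mul_sum]
    refine Finset.sum_congr rfl fun s _ => ?_
    by_cases hs0 : s = 0
    · rw [hs0, hc0]; ring
    by_cases hs1 : 1 - s = 0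
    · rw [← sub_eq_zero.1 hs1, hc1]; ring
    have e : Ψ l * Ψ (s * (k - l)) = Ψ (s * k) * Ψ ((1 - s) * l) := by
      rw [← Ψ.map_add_eq_mul, ← Ψ.map_add_eq_mul]
      congr 1
      ring
    rw [hτψ s hs0, hτψ _ hs1]
    change _ = c s * Ψ (s * k) * Ψ ((1 - s) * l)
    linear_combination c s * e
  have hright : ∀ l (x : 𝒪 p K),
      (γ x (ψ l) : K) = ∑ s, c s * τ s x * τ (1 - s) (ψ l : K) := by
    intro l x
    let h : 𝒪 p K →ₗ[ℤ_[p]] K :=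
      { toFun := fun x => (γ x (ψ l) : K) - ∑ s, c s * τ s x * τ (1 - s) (ψ l : K)
        map_add' := fun x y => by
          simp only [map_add, LinearMap.add_apply, Subalgebra.coe_add, mul_add, add_mul,
            Finset.sum_add_distrib]
          ring
        map_smul' := fun a x => by
          simp only [map_smul, LinearMap.smul_apply, map_padicInt_smul, Subalgebra.coe_smul,
            RingHom.id_apply, smul_sub, Finset.smul_sum, mul_smul_comm, smul_mul_assoc] }
    have := LinearMap.congr_fun (eq_zero_of_forall_addChar hgen ψ hψ1 h
      fun k => sub_eq_zero.2 (hbase k l)) x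
    exact sub_eq_zero.1 this
  intro x y
  let h : 𝒪 p K →ₗ[ℤ_[p]] K :=
    { toFun := fun y => (γ x y : K) - ∑ s, c s * τ s x * τ (1 - s) y
      map_add' := fun y z => by
        simp only [map_add, Subalgebra.coe_add, mul_add, Finset.sum_add_distrib]
        ring
      map_smul' := fun a y => by
        simp only [map_smul, map_padicInt_smul, Subalgebra.coe_smul,
          RingHom.id_apply, smul_sub, Finset.smul_sum, mul_smul_comm] }
  have := LinearMap.congr_fun (eq_zero_of_forall_addChar hgen ψ hψ1 h
    fun l => sub_eq_zero.2 (hright l x)) y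
  exact sub_eq_zero.1 this

end

section

open scoped NNReal

variable {p K θ γ}

section

variable [Algebra.IsAlgebraic ℚ_[p] K]

theorem spectralValuation_coe_le_one (x : 𝒪 p K) : spectralValuation p K x ≤ 1 :=
  (spectralValuation_le_one_iff p (x : K)).2 x.2

theorem spectralValuation_le_of_mem_span {S : Set (𝒪 p K)} {r : ℝ≥0}
    (hS : ∀ x ∈ S, spectralValuation p K x ≤ r) {x : 𝒪 p K} (hx : x ∈ Ideal.span S) :
    spectralValuation p K x ≤ r := by
  induction hx using Submodule.span_induction with
  | mem x hx => exact hS x hx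
  | zero => rw [ZeroMemClass.coe_zero, map_zero]; exact zero_le
  | add x y _ _ hx hy =>
    rw [Subalgebra.coe_add]
    exact Valuation.map_add_le _ hx hy
  | smul a x _ hx =>
    rw [smul_eq_mul, Subalgebra.coe_mul, map_mul]
    exact (mul_le_of_le_one_left zero_le (spectralValuation_coe_le_one a)).trans hx

theorem spectralValuation_le_of_mem_pid_pow {n : ℕ} {x : 𝒪 p K} (hx : x ∈ pid p K θ ^ n) :
    spectralValuation p K x ≤ spectralValuation p K ((θ : K) - 1) ^ n := by
  rw [pid, Ideal.span_singleton_pow] at hx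
  refine spectralValuation_le_of_mem_span (fun y hy => ?_) hx
  rw [Set.mem_singleton_iff.1 hy, ← map_pow]
  rfl

theorem InHhat.spectralValuation_le {i : ℕ} (hγi : InHhat p K θ i γ) {x y : 𝒪 p K}
    (hx : x ∈ pid p K θ ^ i) (hy : y ∈ pid p K θ ^ i) :
    spectralValuation p K (γ x y) ≤ spectralValuation p K ((θ : K) - 1) ^ (2 * i + 1) := by
  have h : γ x y ∈ (pid p K θ ^ (2 * i + 1)).restrictScalars ℤ :=
    hγi ▸ Submodule.subset_span (Set.mem_image2_of_mem hx hy)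
  exact spectralValuation_le_of_mem_pid_pow h

theorem InHhat.spectralValuation_le_of_mem_Wid {i : ℕ} (hγi : InHhat p K θ i γ) {M : ℝ≥0}
    (hM : ∀ x y : 𝒪 p K, spectralValuation p K (γ x y)
      ≤ M * (spectralValuation p K x * spectralValuation p K y)) (k : ℕ) {x : 𝒪 p K}
    (hx : x ∈ Wid p K θ γ i (k + 2)) :
    spectralValuation p K x ≤ spectralValuation p K ((θ : K) - 1) ^ ((k + 2) * i + 1) * M ^ k := by
  induction k generalizing x with
  | zero =>
    refine spectralValuation_le_of_mem_span ?_ hx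
    rintro _ ⟨y, hy, z, hz, rfl⟩
    rw [pow_zero, mul_one, zero_add]
    exact hγi.spectralValuation_le hy hz
  | succ k ih =>
    refine spectralValuation_le_of_mem_span ?_ hx
    rintro _ ⟨y, hy, z, hz, rfl⟩
    calc spectralValuation p K (γ y z)
        ≤ M * (spectralValuation p K y * spectralValuation p K z) := hM y z
      _ ≤ M * (spectralValuation p K ((θ : K) - 1) ^ ((k + 2) * i + 1) * M ^ k
            * spectralValuation p K ((θ : K) - 1) ^ i) := by
          gcongr
          · exact ih hy
          · exact spectralValuation_le_of_mem_pid_pow hz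
      _ = _ := by ring

end

section

variable {ψ : AddChar (ZMod p) (𝒪 p K)} {τ : ZMod p → K →ₙₐ[ℚ_[p]] K} {c : ZMod p → K}

/-- Suitable multiples of the coefficients are combinations of values of `γ` on `𝔭 ^ i`. -/
theorem natCast_mul_coeff_eq_sum (hψ : ψ.IsPrimitive)
    (hτψ : ∀ b ≠ 0, ∀ k, τ b (ψ k : K) = ψ (b * k)) (hc0 : c 0 = 0)
    (hc : ∀ x y : 𝒪 p K, (γ x y : K) = ∑ s, c s * τ s x * τ (1 - s) y) (x y : 𝒪 p K)
    (s : ZMod p) :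
    (p : K) * (c s * τ s x * τ (1 - s) y)
      = ((∑ k, ψ (-(s * k)) * γ (x * ψ k) y : 𝒪 p K) : K) := by
  let Ψ : AddChar (ZMod p) K := (algebraMap (𝒪 p K) K : 𝒪 p K →* K).compAddChar ψ
  have hΨp : Ψ.IsPrimitive := fun a ha h =>
    hψ ha (by ext k; exact DFunLike.congr_fun h k)
  rw [← Ψ.sum_neg_mul_sum hΨp (fun s => c s * τ s x * τ (1 - s) y) s,
    AddSubmonoidClass.coe_finsetSum]
  refine Finset.sum_congr rfl fun k _ => ?_
  rw [Subalgebra.coe_mul, hc]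
  change Ψ _ * _ = Ψ _ * _
  congr 1
  refine Finset.sum_congr rfl fun t _ => ?_
  by_cases ht : t = 0
  · rw [ht, hc0]; ring
  · rw [Subalgebra.coe_mul, map_mul (τ t), hτψ t ht]
    change _ * Ψ _ = _ * (_ * Ψ _) * _
    ring

/-- Suitable multiples of the Jacobi coefficients lie in the ideal `J_i(γ)`. -/
theorem exists_mem_Jid_coe_eq (hτ : IsConjugateFamily (θ : K) τ) (hψ : ψ.IsPrimitive)
    (hτψ : ∀ b ≠ 0, ∀ k, τ b (ψ k : K) = ψ (b * k)) (hc0 : c 0 = 0)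
    (hc : ∀ x y : 𝒪 p K, (γ x y : K) = ∑ s, c s * τ s x * τ (1 - s) y) {i : ℕ} {x : 𝒪 p K}
    (hx : x ∈ pid p K θ ^ i) (s t : ZMod p) :
    ∃ j ∈ Jid p K θ γ i, (j : K) = (p : K) ^ 2 * (IsConjugateFamily.jacobiConst τ c s t (1 - s - t)
      * (τ s x * τ t x * τ (1 - s - t) x)) := by
  let Ψ : AddChar (ZMod p) K := (algebraMap (𝒪 p K) K : 𝒪 p K →* K).compAddChar ψ
  have hΨp : Ψ.IsPrimitive := fun a ha h =>
    hψ ha (by ext k; exact DFunLike.congr_fun h k)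
  have hτΨ : ∀ s k, τ s ((x * ψ k : 𝒪 p K) : K) = τ s x * Ψ (s * k) := by
    intro s k
    by_cases hs : s = 0
    · rw [hs, hτ.zero, hτ.zero, zero_mul]
    · rw [Subalgebra.coe_mul, map_mul, hτψ s hs]; rfl
  let D : ZMod p → ZMod p → K := fun s t => IsConjugateFamily.jacobiConst τ c s t (1 - s - t)
      * (τ s x * τ t x * τ (1 - s - t) x)
  let Q : ZMod p → ZMod p → 𝒪 p K := fun k l =>
    γ (γ (x * ψ k) (x * ψ l)) x + γ (γ (x * ψ l) x) (x * ψ k) + γ (γ x (x * ψ k)) (x * ψ l)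
  have hQ : ∀ k l, (Q k l : K) = ∑ t, (∑ s, D s t * Ψ (s * k)) * Ψ (t * l) := by
    intro k l
    simp only [Q, Subalgebra.coe_add]
    rw [hc (γ _ _), hc (γ _ _), hc (γ _ _), hc (x * ψ k), hc (x * ψ l) x, hc x,
      hτ.sum_sum_jacobi c hc0, Finset.sum_comm]
    refine Finset.sum_congr rfl fun t _ => ?_
    rw [Finset.sum_mul]
    refine Finset.sum_congr rfl fun s _ => ?_
    rw [hτΨ, hτΨ]
    ring
  refine ⟨∑ k, ψ (-(s * k)) * ∑ l, ψ (-(t * l)) * Q k l, ?_, ?_⟩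
  · refine Ideal.sum_mem _ fun k _ => Ideal.mul_mem_left _ _ (Ideal.sum_mem _ fun l _ =>
      Ideal.mul_mem_left _ _ (Ideal.subset_span ?_))
    exact ⟨_, Ideal.mul_mem_right _ _ hx, _, Ideal.mul_mem_right _ _ hx, _, hx, rfl⟩
  · have h1 : ∀ k, ((∑ l, ψ (-(t * l)) * Q k l : 𝒪 p K) : K)
        = p * ∑ s, D s t * Ψ (s * k) := by
      intro k
      rw [AddSubmonoidClass.coe_finsetSum,
        ← Ψ.sum_neg_mul_sum hΨp (fun t => ∑ s, D s t * Ψ (s * k)) t]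
      refine Finset.sum_congr rfl fun l _ => ?_
      rw [Subalgebra.coe_mul, hQ]
      rfl
    have h2 : ∀ k, ((ψ (-(s * k)) * ∑ l, ψ (-(t * l)) * Q k l : 𝒪 p K) : K)
        = p * (Ψ (-(s * k)) * ∑ s, D s t * Ψ (s * k)) := by
      intro k
      rw [Subalgebra.coe_mul, h1, mul_left_comm]
      rfl
    rw [AddSubmonoidClass.coe_finsetSum, Finset.sum_congr rfl fun k _ => h2 k, ← Finset.mul_sum,
      Ψ.sum_neg_mul_sum hΨp (fun s => D s t) s]
    ring

end

theorem exists_primitive_addChar (hθ : IsPrimitiveRoot (θ : K) p) :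
    ∃ ψ : AddChar (ZMod p) (𝒪 p K), ψ.IsPrimitive ∧ ∀ k, ψ k = θ ^ k.val := by
  have h : IsPrimitiveRoot θ p :=
    IsPrimitiveRoot.of_map_of_injective (f := algebraMap (𝒪 p K) K) hθ Subtype.val_injective
  exact ⟨AddChar.zmodChar p h.pow_eq_one, AddChar.zmodChar_primitive_of_primitive_root p h,
    fun k => AddChar.zmodChar_apply _ k⟩

end

/-- For `i > p−1` and `γ ∈ Ĥ_i` with `J_i(γ) ≠ 0`, the Lie ring
`L_i(γ) = 𝔭^i/J_i(γ)` has class at most `p−1`:  `W_p(i) ⊆ J_i(γ)`. -/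
theorem frame_class_at_most_p_sub_one (hp : 5 ≤ p) (hθ : IsPrimitiveRoot (θ : K) p)
    (hgen : Algebra.adjoin ℚ_[p] {(θ : K)} = ⊤)
    (hγ : IsPEquivariant p K θ γ)
    (i : ℕ) (hi : p - 1 < i) (hγi : InHhat p K θ i γ) (hJ : Jid p K θ γ i ≠ ⊥) :
    Wid p K θ γ i p ≤ Jid p K θ γ i := by
  have : Algebra.IsAlgebraic ℚ_[p] K := isAlgebraic_of_adjoin_eq_top hgen
  have : CharZero K := charZero_of_injective_algebraMap (algebraMap ℚ_[p] K).injective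
  have hpp : p.Prime := Fact.out
  have hp0 : (p : K) ≠ 0 := Nat.cast_ne_zero.2 hpp.ne_zero
  obtain ⟨τ, hτ⟩ := exists_isConjugateFamily hθ hgen
  obtain ⟨ψ, hψ, hψθ⟩ := exists_primitive_addChar hθ
  have hψ1 : ψ 1 = θ := by rw [hψθ, ZMod.val_one, pow_one]
  have hτψ : ∀ b ≠ 0, ∀ k, τ b (ψ k : K) = ψ (b * k) := by
    intro b hb k
    rw [hψθ, hψθ, SubmonoidClass.coe_pow, SubmonoidClass.coe_pow, hτ.root b hb, ZMod.val_mul,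
      ← pow_mod_orderOf, ← hθ.eq_orderOf]
  obtain ⟨c, hc0, hca, hc⟩ := hγ.exists_coeff hgen ψ hψ hψθ hψ1 τ hτψ
  obtain ⟨a, ha⟩ := Finite.exists_max fun b => spectralValuation p K (c b)
  have hc1 : c 1 = 0 := by have := hca 0; rwa [sub_zero, hc0, neg_zero] at this
  have hane : c a ≠ 0 := by
    intro h0
    have hcz : ∀ b, c b = 0 := fun b => by
      have := ha b
      rw [h0, map_zero] at this
      exact (Valuation.zero_iff _).1 (le_antisymm this zero_le)
    have hγ0 : ∀ x y, γ x y = 0 := fun x y => Subtype.ext (by rw [hc]; simp [hcz])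
    refine hJ (Ideal.span_eq_bot.2 ?_)
    rintro _ ⟨x, -, y, -, z, -, rfl⟩
    simp [hγ0]
  have ha0 : a ≠ 0 := by rintro rfl; exact hane hc0
  have ha1 : 1 - a ≠ 0 := fun h => hane (by rw [← sub_eq_zero.1 h, hc1])
  obtain ⟨ρ, hρ⟩ : ∃ ρ, spectralValuation p K ((θ : K) - 1) = ρ := ⟨_, rfl⟩
  obtain ⟨M, hM⟩ : ∃ M, spectralValuation p K (c a) = M := ⟨_, rfl⟩
  have hρp : ρ ^ (p - 1) = spectralValuation p K p := hρ ▸ hτ.spectralValuation_sub_one_pow hθ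
  have hρ1 : ρ ≤ 1 := by
    have := spectralValuation_coe_le_one (θ - 1)
    rwa [AddSubgroupClass.coe_sub, OneMemClass.coe_one, hρ] at this
  have hρ0 : ρ ≠ 0 := hρ ▸ (Valuation.ne_zero_iff _).2 (sub_ne_zero.2 (hθ.ne_one hpp.one_lt))
  have hγM : ∀ x y : 𝒪 p K, spectralValuation p K (γ x y)
      ≤ M * (spectralValuation p K x * spectralValuation p K y) := by
    intro x y
    rw [hc]
    refine Valuation.map_sum_le _ fun s _ => ?_
    rw [map_mul, map_mul, mul_assoc]
    gcongr
    · exact hM ▸ ha s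
    · exact hτ.valuation_le _ _
    · exact hτ.valuation_le _ _
  obtain ⟨x, hx⟩ : ∃ x : 𝒪 p K, x = (θ - 1) ^ i := ⟨_, rfl⟩
  have hxp : x ∈ pid p K θ ^ i := hx ▸ Ideal.pow_mem_pow (Ideal.mem_span_singleton_self _) i
  have hvx : spectralValuation p K (x : K) = ρ ^ i := by
    rw [hx, SubmonoidClass.coe_pow, AddSubgroupClass.coe_sub, OneMemClass.coe_one, map_pow, hρ]
  have hMρ : M * ρ ^ (p - 2) ≤ 1 := by
    have h1 : spectralValuation p K ((p : K) * (c a * τ a x * τ (1 - a) x)) ≤ ρ ^ (2 * i + 1) := by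
      rw [natCast_mul_coeff_eq_sum hψ hτψ hc0 hc, AddSubmonoidClass.coe_finsetSum]
      refine Valuation.map_sum_le _ fun k _ => ?_
      rw [Subalgebra.coe_mul, map_mul]
      exact (mul_le_of_le_one_left zero_le (spectralValuation_coe_le_one _)).trans
        (hρ ▸ hγi.spectralValuation_le (Ideal.mul_mem_right _ _ hxp) hxp)
    rw [map_mul, map_mul, map_mul, hτ.valuation_eq ha0, hτ.valuation_eq ha1, hvx, hM,
      ← hρp, show p - 1 = p - 2 + 1 by omega] at h1
    refine le_of_mul_le_mul_right ?_ (pow_pos (pos_iff_ne_zero.2 hρ0) (2 * i + 1))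
    calc M * ρ ^ (p - 2) * ρ ^ (2 * i + 1) = ρ ^ (p - 2 + 1) * (M * ρ ^ i * ρ ^ i) := by ring
      _ ≤ 1 * ρ ^ (2 * i + 1) := by rwa [one_mul]
  obtain ⟨s, t, hs, ht, hu, hst⟩ := hτ.exists_le_valuation_jacobiConst c hc0 hca hane ha
  rw [hM] at hst
  obtain ⟨j, hjJ, hj⟩ := exists_mem_Jid_coe_eq hτ hψ hτψ hc0 hc hxp s t
  have hvj : (ρ ^ (p - 1)) ^ 2 * (M ^ 2 * ρ ^ (3 * i)) ≤ spectralValuation p K j := by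
    rw [hj, map_mul, map_pow, hρp, map_mul, map_mul, map_mul, hτ.valuation_eq hs,
      hτ.valuation_eq ht, hτ.valuation_eq hu, hvx,
      show ρ ^ (3 * i) = ρ ^ i * ρ ^ i * ρ ^ i by ring]
    gcongr
  intro w hw
  have hvw : spectralValuation p K w ≤ spectralValuation p K j := by
    refine le_trans ?_ ((NNReal.pow_mul_pow_le_of_mul_pow_le_one hp (by omega) hρ1 hMρ).trans hvj)
    have := hγi.spectralValuation_le_of_mem_Wid hγM (p - 2) (x := w)
    rw [show p - 2 + 2 = p by omega, hρ] at this
    exact this hw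
  have hM0 : M ≠ 0 := hM ▸ (Valuation.ne_zero_iff _).2 hane
  have hj0 : spectralValuation p K j ≠ 0 := fun h => by
    rw [h] at hvj
    exact mul_ne_zero (pow_ne_zero _ (pow_ne_zero _ hρ0))
      (mul_ne_zero (pow_ne_zero _ hM0) (pow_ne_zero _ hρ0)) (le_antisymm hvj zero_le)
  have hjK : (j : K) ≠ 0 := (Valuation.ne_zero_iff _).1 hj0
  have hq : spectralValuation p K ((w : K) / j) ≤ 1 := by
    rw [map_div₀]
    exact div_le_one_of_le₀ hvw zero_le
  have hw' : w = (⟨w / j, (spectralValuation_le_one_iff p _).1 hq⟩ : 𝒪 p K) * j :=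
    Subtype.ext (div_mul_cancel₀ _ hjK).symm
  rw [hw']
  exact Ideal.mul_mem_left _ _ hjJ

end MaximalClassFrame
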